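/- For all natural numbers m and n, the ℓ-adic q-binomial coefficients satisfy ⟨m+n; m⟩_λ = ⟨m+n; n⟩_λ. -/

import Mathlib

/-!
Compare units digits and recurse on `m / ℓ` and `n / ℓ`. If the units digits `a`, `b` of `m`, `n`
satisfy `a + b < ℓ`, then `m + n` has units digit `a + b`, and
`[a+b; a] = [a+b]! / ([a]! [b]!) = [a+b; b]`; here `[a]!` and `[b]!` are nonzero because `q ^ 2`
has order at least `ℓ`. If a carry occurs, then `m + n` has units digit `a + b - ℓ`, which is
smaller than both `a` and `b`, so both `ℓ`-adic coefficients contain a zero factor.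
-/

noncomputable section

namespace QD

/-- The q-binomial coefficient `[m; n]_q = ∏_{j=1}^{n} (q^{m-j+1} - q^{-m+j-1})/(q^j - q^{-j})`. -/
def qbinom (q : ℂ) (m : ℤ) (n : ℕ) : ℂ :=
  ∏ j ∈ Finset.range n, (q ^ (m - j) - q ^ (-m + j)) / (q ^ ((j : ℤ) + 1) - q ^ (-(j : ℤ) - 1))

/-- The `i`-th digit of `m` in base `ℓ`. -/
def digit (ℓ m i : ℕ) : ℕ := m / ℓ ^ i % ℓ

/-- The `ℓ`-adic q-binomial coefficient `⟨m; n⟩_q = ∏_{i ≥ 0} [m_i; n_i]_q`, where `m_i, n_i`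
are the base-`ℓ` digits of `m` and `n`.  (All factors with `i > m + n` equal `1` since the
corresponding digits vanish when `ℓ ≥ 2`, so the product may be cut off at `m + n + 1`.) -/
def lbinom (ℓ : ℕ) (q : ℂ) (m n : ℕ) : ℂ :=
  ∏ i ∈ Finset.range (m + n + 1), qbinom q (digit ℓ m i) (digit ℓ n i)

/-- The q-factorial `[n]! = ∏_{j=1}^{n} (q^j - q^{-j})`, without the usual normalising factor
`(q - q⁻¹)^{-n}`: the denominator of `qbinom q m n`. -/
def qfactorial (q : ℂ) (n : ℕ) : ℂ :=
  ∏ j ∈ Finset.range n, (q ^ ((j : ℤ) + 1) - q ^ (-(j : ℤ) - 1))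

lemma qfactorial_ne_zero {q : ℂ} (hq₀ : q ≠ 0) {n : ℕ}
    (hq : ∀ k : ℕ, k ≠ 0 → k ≤ n → (q ^ 2) ^ k ≠ 1) : qfactorial q n ≠ 0 := by
  refine Finset.prod_ne_zero_iff.2 fun j hj hzero => ?_
  refine hq (j + 1) j.succ_ne_zero (Finset.mem_range.1 hj) ?_
  have hinv : q ^ (j + 1) = (q ^ (j + 1))⁻¹ := by
    rw [← neg_add', zpow_neg] at hzero
    exact_mod_cast sub_eq_zero.1 hzero
  rw [pow_right_comm, sq]
  nth_rewrite 1 [hinv]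
  exact inv_mul_cancel₀ (pow_ne_zero _ hq₀)

lemma qfactorial_mul_prod_eq_qfactorial_add (q : ℂ) (a b : ℕ) :
    qfactorial q b * ∏ j ∈ Finset.range a, (q ^ ((a + b : ℤ) - j) - q ^ (-(a + b : ℤ) + j)) =
      qfactorial q (a + b) := by
  rw [add_comm a b, qfactorial, qfactorial, Finset.prod_range_add,
    ← Finset.prod_range_reflect _ a]
  congr! 4 with j hj <;> rw [Finset.mem_range] at hj <;> omega

lemma qbinom_add_eq_div {q : ℂ} (a : ℕ) {b : ℕ} (hb : qfactorial q b ≠ 0) :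
    qbinom q (a + b : ℤ) a = qfactorial q (a + b) / (qfactorial q a * qfactorial q b) := by
  rw [← qfactorial_mul_prod_eq_qfactorial_add, mul_comm (qfactorial q a),
    mul_div_mul_left _ _ hb, qbinom, Finset.prod_div_distrib, qfactorial]

lemma qbinom_add_left_eq_add_right {q : ℂ} {a b : ℕ} (ha : qfactorial q a ≠ 0)
    (hb : qfactorial q b ≠ 0) : qbinom q (a + b : ℤ) a = qbinom q (a + b : ℤ) b := by
  rw [qbinom_add_eq_div a hb, add_comm (a : ℤ), qbinom_add_eq_div b ha, add_comm b,
    mul_comm (qfactorial q b)]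

lemma qbinom_eq_zero_of_lt (q : ℂ) {m n : ℕ} (h : m < n) : qbinom q m n = 0 :=
  Finset.prod_eq_zero (Finset.mem_range.2 h) (by simp)

lemma qbinom_zero_right (q : ℂ) (m : ℤ) : qbinom q m 0 = 1 :=
  Finset.prod_range_zero _

lemma digit_zero (ℓ m : ℕ) : digit ℓ m 0 = m % ℓ := by
  rw [digit, pow_zero, Nat.div_one]

lemma digit_succ (ℓ m i : ℕ) : digit ℓ m (i + 1) = digit ℓ (m / ℓ) i := by
  rw [digit, digit, pow_succ', Nat.div_div_eq_div_mul]

lemma digit_eq_zero_of_lt_pow {ℓ m i : ℕ} (h : m < ℓ ^ i) : digit ℓ m i = 0 := by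
  rw [digit, Nat.div_eq_of_lt h, Nat.zero_mod]

lemma lbinom_eq_prod_range {ℓ : ℕ} (hℓ : 1 < ℓ) (q : ℂ) (m : ℕ) {n N : ℕ} (hN : n ≤ N) :
    lbinom ℓ q m n = ∏ i ∈ Finset.range N, qbinom q (digit ℓ m i) (digit ℓ n i) := by
  have factor_eq_one : ∀ i ≥ n, qbinom q (digit ℓ m i) (digit ℓ n i) = 1 := fun i hi => by
    rw [digit_eq_zero_of_lt_pow (hi.trans_lt (Nat.lt_pow_self hℓ)), qbinom_zero_right]
  rw [lbinom, Finset.eventually_constant_prod factor_eq_one (by omega : n ≤ m + n + 1),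
    Finset.eventually_constant_prod factor_eq_one hN]

lemma lbinom_eq_lbinom_div_mul_qbinom_mod {ℓ : ℕ} (hℓ : 1 < ℓ) (q : ℂ) (m n : ℕ) :
    lbinom ℓ q m n = lbinom ℓ q (m / ℓ) (n / ℓ) * qbinom q (m % ℓ : ℕ) (n % ℓ) := by
  have hN : n / ℓ ≤ m + n := (Nat.div_le_self n ℓ).trans (Nat.le_add_left n m)
  rw [lbinom_eq_prod_range hℓ q (m / ℓ) hN, lbinom, Finset.prod_range_succ']
  simp only [digit_zero, digit_succ]

lemma lbinom_add_left_of_mod_add_mod_lt {ℓ : ℕ} (hℓ : 1 < ℓ) (q : ℂ) {m n : ℕ}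
    (h : m % ℓ + n % ℓ < ℓ) :
    lbinom ℓ q (m + n) m =
      lbinom ℓ q (m / ℓ + n / ℓ) (m / ℓ) * qbinom q ((m % ℓ : ℕ) + (n % ℓ : ℕ)) (m % ℓ) := by
  rw [lbinom_eq_lbinom_div_mul_qbinom_mod hℓ, Nat.add_div_eq_of_add_mod_lt h,
    Nat.add_mod_of_add_mod_lt h, Nat.cast_add]

lemma lbinom_add_left_eq_zero_of_le_mod_add_mod {ℓ : ℕ} (hℓ : 1 < ℓ) (q : ℂ) {m n : ℕ}
    (h : ℓ ≤ m % ℓ + n % ℓ) : lbinom ℓ q (m + n) m = 0 := by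
  have hlt : (m + n) % ℓ < m % ℓ := by
    have hcarry := Nat.add_mod_add_of_le_add_mod h
    have hn : n % ℓ < ℓ := Nat.mod_lt n (by omega)
    omega
  rw [lbinom_eq_lbinom_div_mul_qbinom_mod hℓ, qbinom_eq_zero_of_lt q hlt, mul_zero]

theorem lbinom_add_left_eq_add_right_general {ℓ : ℕ} (hℓ : 1 < ℓ) {q : ℂ} (hq₀ : q ≠ 0)
    (hq : ∀ k : ℕ, k ≠ 0 → k < ℓ → (q ^ 2) ^ k ≠ 1) (m n : ℕ) :
    lbinom ℓ q (m + n) m = lbinom ℓ q (m + n) n := by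
  induction hs : m + n using Nat.strong_induction_on generalizing m n with | _ s ih
  subst hs
  obtain hzero | hpos := Nat.eq_zero_or_pos (m + n)
  · obtain ⟨rfl, rfl⟩ := Nat.add_eq_zero_iff.1 hzero
    rfl
  obtain hnocarry | hcarry := lt_or_ge (m % ℓ + n % ℓ) ℓ
  · have qfactorial_mod_ne_zero (a : ℕ) : qfactorial q (a % ℓ) ≠ 0 :=
      qfactorial_ne_zero hq₀ fun k hk hka => hq k hk (hka.trans_lt (Nat.mod_lt a (by omega)))
    have hdiv : m / ℓ + n / ℓ < m + n :=
      Nat.div_add_div_le_add_div.trans_lt (Nat.div_lt_self hpos hℓ)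
    calc
      lbinom ℓ q (m + n) m
          = lbinom ℓ q (m / ℓ + n / ℓ) (m / ℓ) *
              qbinom q ((m % ℓ : ℕ) + (n % ℓ : ℕ)) (m % ℓ) :=
        lbinom_add_left_of_mod_add_mod_lt hℓ q hnocarry
      _ = lbinom ℓ q (m / ℓ + n / ℓ) (n / ℓ) *
              qbinom q ((m % ℓ : ℕ) + (n % ℓ : ℕ)) (n % ℓ) := by
        rw [ih _ hdiv _ _ rfl, qbinom_add_left_eq_add_right (qfactorial_mod_ne_zero m)
          (qfactorial_mod_ne_zero n)]
      _ = lbinom ℓ q (m + n) n := by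
        rw [add_comm m, lbinom_add_left_of_mod_add_mod_lt hℓ q (by rwa [add_comm]),
          add_comm (n / ℓ), add_comm ((n % ℓ : ℕ) : ℤ)]
  · rw [lbinom_add_left_eq_zero_of_le_mod_add_mod hℓ q hcarry, add_comm m,
      lbinom_add_left_eq_zero_of_le_mod_add_mod hℓ q (by rwa [add_comm])]

/-- for all natural numbers `m` and `n`, the `ℓ`-adic q-binomial coefficients
satisfy `⟨m+n; m⟩_λ = ⟨m+n; n⟩_λ`. -/
theorem lbinom_add_left_eq_add_right (ℓ : ℕ) (hℓ : 1 < ℓ) (hodd : Odd ℓ) (q : ℂ)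
    (hq : IsPrimitiveRoot q ℓ) (m n : ℕ) :
    lbinom ℓ q (m + n) m = lbinom ℓ q (m + n) n := by
  have hq_sq : IsPrimitiveRoot (q ^ 2) ℓ :=
    hq.pow_of_coprime 2 (Nat.coprime_two_left.2 hodd)
  exact lbinom_add_left_eq_add_right_general hℓ (hq.ne_zero (by omega))
    (fun _ => hq_sq.pow_ne_one_of_pos_of_lt) m n

end QD
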